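/- arXiv:1908.10539 — 6 statements merged into one kernel-verified Lean document; each statement's English description precedes it below -/
import Mathlib

section
/- Each harmonic extension matrix A_i for SG_N (N ≥ 3, i ∈ {0,…,N−1}) has spectrum exactly {1, N/(N+2), 1/(N+2)}, the eigenspace for eigenvalue 1 has dimension 1, the eigenspace for eigenvalue N/(N+2) has dimension 1, and the eigenspace for eigenvalue 1/(N+2) has dimension N−2; in particular A_i is invertible. -/
/-!
`A_i` is a rank-two perturbation of a scalar. With `e` the constant function `1`, `f = 1 - δ_i` and
`m u` the mean of `u_k - u_i` over `k ≠ i`,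
  `A_i u = u / (N + 2) + (1 - 1 / (N + 2)) u_i e + (N / (N + 2) - 1 / (N + 2)) m(u) f`.
The functionals `u ↦ u_i` and `m` are biorthogonal to `e` and `f`, so `e` and `f` are eigenvectors
for `1` and `N / (N + 2)`, and `A_i` acts as `1 / (N + 2)` on the common kernel of the functionals,
which has dimension `N - 2`. Applying the functionals to `A_i u = μ u` rules out other eigenvalues.
-/

open Matrix Filter

/-- The harmonic extension matrix `A_i` for `SG_N`. -/
noncomputable def harmA (N : ℕ) (i : Fin N) : Matrix (Fin N) (Fin N) ℝ :=
  Matrix.of fun j k =>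
    if j = i then (if k = i then 1 else 0)
    else if k = i then 2 / (N + 2)
    else (1 + if j = k then 1 else 0) / (N + 2)

/-- The energy bilinear form `E(u,v) = ∑_{k<l} (u_k - u_l)(v_k - v_l)` on `ℝ^N`. -/
noncomputable def energy (N : ℕ) (u v : Fin N → ℝ) : ℝ :=
  ∑ k : Fin N, ∑ l : Fin N, if k < l then (u k - u l) * (v k - v l) else 0
open Module End

section DiagonalOperator

variable {K V ι : Type*} [Field K] [AddCommGroup V] [Module K V]

/-- Biorthogonality of a family of functionals and a family of vectors with the same index type.
Unlike `Module.DualBases`, it does not ask the families to span. -/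
def Biorthogonal [DecidableEq ι] (φ : ι → Dual K V) (v : ι → V) : Prop :=
  ∀ r s, φ r (v s) = if r = s then 1 else 0

/-- The operator `u ↦ a u + ∑ r, (d r - a) φ_r(u) v_r`. For biorthogonal `φ` and `v` it is
diagonalizable, with eigenvalue `d r` on `v r` and `a` on the common kernel of `φ`. -/
def diagonalOperator [Fintype ι] (a : K) (d : ι → K) (φ : ι → Dual K V) (v : ι → V) : End K V :=
  a • LinearMap.id + ∑ r, (d r - a) • (φ r).smulRight (v r)

lemma diagonalOperator_apply [Fintype ι] (a : K) (d : ι → K) (φ : ι → Dual K V) (v : ι → V)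
    (u : V) : diagonalOperator a d φ v u = a • u + ∑ r, (d r - a) • φ r u • v r := by
  simp [diagonalOperator]

lemma ker_pi_le_eigenspace_diagonalOperator [Fintype ι] (a : K) (d : ι → K) (φ : ι → Dual K V)
    (v : ι → V) : LinearMap.ker (LinearMap.pi φ) ≤ eigenspace (diagonalOperator a d φ v) a := by
  intro u hu
  have hφu (r : ι) : φ r u = 0 := congrFun (LinearMap.mem_ker.1 hu) r
  simp [diagonalOperator_apply, hφu]

namespace Biorthogonal

variable [DecidableEq ι] {φ : ι → Dual K V} {v : ι → V}

lemma vector_ne_zero (h : Biorthogonal φ v) (r : ι) : v r ≠ 0 := by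
  intro hv
  simpa [hv] using h r r

lemma pi_surjective [Finite ι] (h : Biorthogonal φ v) : Function.Surjective (LinearMap.pi φ) := by
  have := Fintype.ofFinite ι
  exact fun c => ⟨∑ s, c s • v s, by ext r; simp [h r]⟩

variable [Fintype ι]

lemma finrank_ker_pi [FiniteDimensional K V] (h : Biorthogonal φ v) :
    finrank K (LinearMap.ker (LinearMap.pi φ)) = finrank K V - Fintype.card ι := by
  have hrank := (LinearMap.pi φ).finrank_range_add_finrank_ker
  rw [LinearMap.range_eq_top.2 h.pi_surjective, finrank_top, finrank_pi] at hrank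
  omega

lemma diagonalOperator_vector (h : Biorthogonal φ v) (a : K) (d : ι → K) (s : ι) :
    diagonalOperator a d φ v (v s) = d s • v s := by
  simp [diagonalOperator_apply, h _ s, ← add_smul]

lemma dual_diagonalOperator (h : Biorthogonal φ v) (a : K) (d : ι → K) (r : ι) (u : V) :
    φ r (diagonalOperator a d φ v u) = d r * φ r u := by
  simp only [diagonalOperator_apply, map_add, map_smul, map_sum, h r, smul_eq_mul, mul_ite,
    mul_one, mul_zero, Finset.sum_ite_eq, Finset.mem_univ, if_true]
  ring

lemma dual_eq_zero_of_mem_eigenspace (h : Biorthogonal φ v) {a μ : K} {d : ι → K} {u : V}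
    (hu : u ∈ eigenspace (diagonalOperator a d φ v) μ) {r : ι} (hr : d r ≠ μ) : φ r u = 0 := by
  have hφu : d r * φ r u = μ * φ r u := by
    rw [← h.dual_diagonalOperator a, mem_eigenspace_iff.1 hu, map_smul, smul_eq_mul]
  exact (mul_eq_mul_right_iff.1 hφu).resolve_left hr

lemma eigenspace_diagonalOperator_scalar (h : Biorthogonal φ v) {a : K} {d : ι → K}
    (hd : ∀ r, d r ≠ a) :
    eigenspace (diagonalOperator a d φ v) a = LinearMap.ker (LinearMap.pi φ) :=
  le_antisymm
    (fun _ hu => LinearMap.mem_ker.2 <| funext fun r => h.dual_eq_zero_of_mem_eigenspace hu (hd r))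
    (ker_pi_le_eigenspace_diagonalOperator a d φ v)

lemma eigenspace_diagonalOperator_vector (h : Biorthogonal φ v) {a : K} {d : ι → K}
    (hinj : Function.Injective d) {r : ι} (hr : d r ≠ a) :
    eigenspace (diagonalOperator a d φ v) (d r) = K ∙ v r := by
  apply le_antisymm
  · intro u hu
    have hφu : ∀ s, s ≠ r → φ s u = 0 := fun s hs =>
      h.dual_eq_zero_of_mem_eigenspace hu (hinj.ne hs)
    have heq : a • u + (d r - a) • φ r u • v r = d r • u := by
      rw [← mem_eigenspace_iff.1 hu, diagonalOperator_apply, Fintype.sum_eq_single r]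
      intro s hs
      simp [hφu s hs]
    have hscaled : (d r - a) • φ r u • v r = (d r - a) • u := by
      rw [sub_smul _ _ u, ← heq, add_sub_cancel_left]
    exact Submodule.mem_span_singleton.2 ⟨φ r u, smul_right_injective V (sub_ne_zero.2 hr) hscaled⟩
  · rw [Submodule.span_singleton_le_iff_mem, mem_eigenspace_iff]
    exact h.diagonalOperator_vector a d r

lemma finrank_eigenspace_diagonalOperator_vector (h : Biorthogonal φ v) {a : K} {d : ι → K}
    (hinj : Function.Injective d) {r : ι} (hr : d r ≠ a) :
    finrank K (eigenspace (diagonalOperator a d φ v) (d r)) = 1 := by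
  rw [h.eigenspace_diagonalOperator_vector hinj hr, finrank_span_singleton (h.vector_ne_zero r)]

lemma eq_or_mem_range_of_hasEigenvalue (h : Biorthogonal φ v) {a μ : K} {d : ι → K}
    (hμ : HasEigenvalue (diagonalOperator a d φ v) μ) : μ ∈ Set.range d ∨ μ = a := by
  by_contra! ⟨hrange, ha⟩
  obtain ⟨u, hu, hu0⟩ := hμ.exists_hasEigenvector
  have hφu (r : ι) : φ r u = 0 :=
    h.dual_eq_zero_of_mem_eigenspace hu fun hr => hrange ⟨r, hr⟩
  have hau : a • u = μ • u := by
    simpa [diagonalOperator_apply, hφu] using mem_eigenspace_iff.1 hu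
  exact ha (smul_left_injective K hu0 hau).symm

lemma spectrum_diagonalOperator [FiniteDimensional K V] (h : Biorthogonal φ v) (a : K) (d : ι → K)
    (hcard : Fintype.card ι < finrank K V) :
    spectrum K (diagonalOperator a d φ v) = Set.range d ∪ {a} := by
  ext μ
  rw [← hasEigenvalue_iff_mem_spectrum]
  refine ⟨h.eq_or_mem_range_of_hasEigenvalue, ?_⟩
  rintro (⟨r, rfl⟩ | rfl)
  · exact hasEigenvalue_of_hasEigenvector
      ⟨mem_eigenspace_iff.2 (h.diagonalOperator_vector a d r), h.vector_ne_zero r⟩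
  · have hker : LinearMap.ker (LinearMap.pi φ) ≠ ⊥ :=
      LinearMap.ker_ne_bot_of_finrank_lt (by rwa [finrank_pi])
    exact ne_bot_of_le_ne_bot hker (ker_pi_le_eigenspace_diagonalOperator _ d φ v)

end Biorthogonal

end DiagonalOperator

section HarmonicExtension

variable {N : ℕ} (i : Fin N)

/-- The mean of `u k - u i` over `k ≠ i`: up to a factor, the normal derivative of `u` at the
boundary vertex `i`. The sum may run over all `k`, as the term `k = i` vanishes. -/
noncomputable def meanDifference : Dual ℝ (Fin N → ℝ) :=
  ((N : ℝ) - 1)⁻¹ • ∑ k, ((LinearMap.proj k : Dual ℝ (Fin N → ℝ)) - LinearMap.proj i)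

/-- The left eigenvectors of `A_i` for the eigenvalues `1` and `N / (N + 2)`. -/
noncomputable def harmFunctional : Fin 2 → Dual ℝ (Fin N → ℝ) :=
  ![LinearMap.proj i, meanDifference i]

/-- The eigenvectors of `A_i` for the eigenvalues `1` and `N / (N + 2)`. -/
def harmVector : Fin 2 → Fin N → ℝ :=
  ![1, 1 - Pi.single i 1]

/-- The eigenvalues of `A_i` on `harmVector i`. -/
noncomputable def harmEigenvalue (N : ℕ) : Fin 2 → ℝ :=
  ![1, (N : ℝ) / (N + 2)]

lemma meanDifference_apply (u : Fin N → ℝ) :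
    meanDifference i u = (∑ k, u k - N * u i) / (N - 1) := by
  simp [meanDifference, div_eq_inv_mul]

lemma biorthogonal_harmFunctional_harmVector (hN : N ≠ 1) :
    Biorthogonal (harmFunctional i) (harmVector i) := by
  have hN' : (N : ℝ) - 1 ≠ 0 := sub_ne_zero.2 (by exact_mod_cast hN)
  intro r s
  fin_cases r <;> fin_cases s <;>
    simp [harmFunctional, harmVector, meanDifference_apply, hN']

lemma harmA_mulVec_self (u : Fin N → ℝ) : (harmA N i *ᵥ u) i = u i := by
  simp [harmA, mulVec, dotProduct]

lemma harmA_mulVec_of_ne {i j : Fin N} (hj : j ≠ i) (u : Fin N → ℝ) :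
    (harmA N i *ᵥ u) j = (u i + ∑ k, u k + u j) / (N + 2) := by
  have hrow : harmA N i j = ((N : ℝ) + 2)⁻¹ • (Pi.single i 1 + 1 + Pi.single j 1) := by
    ext k
    obtain rfl | hki := eq_or_ne k i
    · simp [harmA, hj, hj.symm, div_eq_inv_mul, one_add_one_eq_two]
    · simp [harmA, hj, hki, Pi.single_apply, eq_comm (a := k), div_eq_inv_mul]
  simp only [mulVec, hrow, smul_dotProduct, add_dotProduct, single_one_dotProduct, one_dotProduct,
    smul_eq_mul, div_eq_inv_mul]

lemma diagonalOperator_harmFunctional_harmVector_apply (a : ℝ) (u : Fin N → ℝ) (j : Fin N) :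
    diagonalOperator a (harmEigenvalue N) (harmFunctional i) (harmVector i) u j =
      a * u j + (1 - a) * u i +
        (N / (N + 2) - a) * (meanDifference i u * (1 - (Pi.single i 1 : Fin N → ℝ) j)) := by
  simp [diagonalOperator_apply, harmEigenvalue, harmFunctional, harmVector, add_assoc]

lemma mulVecLin_harmA (hN : N ≠ 1) :
    mulVecLin (harmA N i) = diagonalOperator (1 / ((N : ℝ) + 2)) (harmEigenvalue N)
      (harmFunctional i) (harmVector i) := by
  have hN' : (N : ℝ) - 1 ≠ 0 := sub_ne_zero.2 (by exact_mod_cast hN)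
  refine LinearMap.ext fun u => funext fun j => ?_
  rw [mulVecLin_apply, diagonalOperator_harmFunctional_harmVector_apply]
  obtain rfl | hj := eq_or_ne j i
  · rw [harmA_mulVec_self, Pi.single_eq_same]
    ring
  · rw [harmA_mulVec_of_ne hj, Pi.single_eq_of_ne hj, meanDifference_apply]
    field_simp
    ring

lemma harmEigenvalue_injective (N : ℕ) : Function.Injective (harmEigenvalue N) := by
  have h : (1 : ℝ) ≠ N / (N + 2) := by
    rw [ne_eq, eq_div_iff (by positivity)]
    simp
  intro r s
  fin_cases r <;> fin_cases s <;> simp [harmEigenvalue, h, h.symm]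

lemma harmEigenvalue_ne (hN : N ≠ 1) (r : Fin 2) : harmEigenvalue N r ≠ 1 / ((N : ℝ) + 2) := by
  have hN2 : (N : ℝ) + 2 ≠ 0 := by positivity
  fin_cases r
  · have hlt : 1 / ((N : ℝ) + 2) < 1 := by
      rw [div_lt_one (by positivity)]
      linarith [N.cast_nonneg (α := ℝ)]
    exact hlt.ne'
  · exact fun h => hN (by exact_mod_cast (div_left_inj' hN2).1 h)

lemma finrank_eigenspace_harmA_harmEigenvalue (hN : N ≠ 1) (r : Fin 2) :
    finrank ℝ (eigenspace (mulVecLin (harmA N i)) (harmEigenvalue N r)) = 1 := by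
  rw [mulVecLin_harmA i hN]
  exact (biorthogonal_harmFunctional_harmVector i hN).finrank_eigenspace_diagonalOperator_vector
    (harmEigenvalue_injective N) (harmEigenvalue_ne hN r)

lemma finrank_eigenspace_harmA_scalar (hN : N ≠ 1) :
    finrank ℝ (eigenspace (mulVecLin (harmA N i)) (1 / ((N : ℝ) + 2))) = N - 2 := by
  have hbi := biorthogonal_harmFunctional_harmVector i hN
  rw [mulVecLin_harmA i hN, hbi.eigenspace_diagonalOperator_scalar (harmEigenvalue_ne hN),
    hbi.finrank_ker_pi, finrank_fin_fun, Fintype.card_fin]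

lemma spectrum_harmA (hN : 3 ≤ N) :
    spectrum ℝ (harmA N i) = {1, (N : ℝ) / (N + 2), 1 / ((N : ℝ) + 2)} := by
  have hN1 : N ≠ 1 := by omega
  rw [← spectrum_toLin', toLin'_apply', mulVecLin_harmA i hN1,
    (biorthogonal_harmFunctional_harmVector i hN1).spectrum_diagonalOperator _ _ (by simpa)]
  simp only [harmEigenvalue, range_cons, range_empty, Set.union_empty, Set.singleton_union,
    Set.insert_union]

lemma isUnit_harmA (hN : 3 ≤ N) : IsUnit (harmA N i) := by
  rw [← spectrum.zero_notMem_iff ℝ, spectrum_harmA i hN]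
  have hN0 : (N : ℝ) ≠ 0 := by exact_mod_cast (by omega : N ≠ 0)
  have hN2 : (N : ℝ) + 2 ≠ 0 := by positivity
  simp only [Set.mem_insert_iff, Set.mem_singleton_iff, not_or]
  exact ⟨zero_ne_one, (div_ne_zero hN0 hN2).symm, (one_div_ne_zero hN2).symm⟩

end HarmonicExtension

theorem spectrum_and_eigenspace_dims_of_harmA (N : ℕ) (hN : 3 ≤ N) (i : Fin N) :
    spectrum ℝ (harmA N i) = {1, (N : ℝ) / (N + 2), 1 / ((N : ℝ) + 2)} ∧
    Module.finrank ℝ (Module.End.eigenspace (Matrix.mulVecLin (harmA N i)) 1) = 1 ∧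
    Module.finrank ℝ
      (Module.End.eigenspace (Matrix.mulVecLin (harmA N i)) ((N : ℝ) / (N + 2))) = 1 ∧
    Module.finrank ℝ
      (Module.End.eigenspace (Matrix.mulVecLin (harmA N i)) (1 / ((N : ℝ) + 2))) = N - 2 ∧
    IsUnit (harmA N i) := by
  have hN1 : N ≠ 1 := by omega
  exact ⟨spectrum_harmA i hN, finrank_eigenspace_harmA_harmEigenvalue i hN1 0,
    finrank_eigenspace_harmA_harmEigenvalue i hN1 1, finrank_eigenspace_harmA_scalar i hN1,
    isUnit_harmA i hN⟩
end

section
/- For the harmonic extension matrix A_i of SG_N (N ≥ 3): the eigenspace of A_i for eigenvalue 1 is exactly the space of constant vectors; the eigenspace for eigenvalue N/(N+2) is exactly the span of the vector whose i-th coordinate is 0 and all other coordinates are 1; and the eigenspace for eigenvalue 1/(N+2) is exactly {v ∈ ℝ^N : v_i = 0 and Σ_{j=0}^{N−1} v_j = 0}. -/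
open Matrix Filter

/-!
Row `i` of the equation `A_i v = μ v` forces `v_i = 0` as soon as `μ ≠ 1`. For `μ = 1` the vector
`v - v_i`, obtained by subtracting a constant, is again fixed and vanishes at `i`. Among vectors
with `v_i = 0` the equation says that `∑ v = (μ (N + 2) - 1) v_j` for every `j ≠ i`, and the factor
is `N + 1`, `N - 1`, `0` for the three eigenvalues. The last two cases can be read off. In the first
one, summing over `j ≠ i` gives `(N + 1) ∑ v = (N - 1) ∑ v`, so `∑ v = 0` and hence `v = 0`.
-/

theorem sum_eq_add_card_sub_one_mul_of_forall_ne {ι R : Type*} [Fintype ι] [Ring R] {f : ι → R}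
    {i : ι} {a : R} (h : ∀ j, j ≠ i → f j = a) :
    ∑ j, f j = f i + ((Fintype.card ι : R) - 1) * a := by
  classical
  have h_compl : ∑ j ∈ {i}ᶜ, f j = ∑ _j ∈ {i}ᶜ, a :=
    Finset.sum_congr rfl fun j hj => h j (by simpa using hj)
  rw [Fintype.sum_eq_add_sum_compl i, h_compl, Finset.sum_const, Finset.card_compl,
    Finset.card_singleton, nsmul_eq_mul, Nat.cast_pred (Fintype.card_pos_iff.mpr ⟨i⟩)]

section HarmonicExtension

variable {N : ℕ} {i j : Fin N} {v : Fin N → ℝ} {μ : ℝ}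

theorem harmA_mulVec_apply_self (i : Fin N) (v : Fin N → ℝ) : (harmA N i *ᵥ v) i = v i := by
  simp [harmA, mulVec, dotProduct]

theorem harmA_apply_of_ne (hj : j ≠ i) (k : Fin N) :
    harmA N i j k = (1 + (if k = i then 1 else 0) + if j = k then 1 else 0) / (N + 2) := by
  rcases eq_or_ne k i with rfl | hk
  · norm_num [harmA, hj]
  · simp [harmA, hj, hk]

theorem harmA_mulVec_apply_of_ne (hj : j ≠ i) (v : Fin N → ℝ) :
    (harmA N i *ᵥ v) j = (∑ k, v k + v i + v j) / (N + 2) := by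
  simp [mulVec, dotProduct, harmA_apply_of_ne hj, div_mul_eq_mul_div, ← Finset.sum_div, add_mul,
    Finset.sum_add_distrib]

theorem harmA_mulVec_const (i : Fin N) (c : ℝ) :
    (harmA N i *ᵥ fun _ => c) = fun _ => c := by
  ext j
  rcases eq_or_ne j i with rfl | hj
  · exact harmA_mulVec_apply_self j _
  · rw [harmA_mulVec_apply_of_ne hj, Fin.sum_const, nsmul_eq_mul]
    field_simp
    ring

theorem apply_eq_zero_of_harmA_mulVec_eq_smul (hμ : μ ≠ 1) (h : harmA N i *ᵥ v = μ • v) :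
    v i = 0 := by
  have hrow : v i = μ * v i := by
    simpa only [harmA_mulVec_apply_self, Pi.smul_apply, smul_eq_mul] using congrFun h i
  by_contra hi
  exact hμ (mul_right_cancel₀ hi (by rw [← hrow, one_mul]))

theorem harmA_mulVec_eq_smul_iff_of_apply_eq_zero (hi : v i = 0) :
    harmA N i *ᵥ v = μ • v ↔ ∀ j, j ≠ i → ∑ k, v k = (μ * (N + 2) - 1) * v j := by
  have hrow : ∀ j, j ≠ i → ((harmA N i *ᵥ v) j = (μ • v) j ↔
      ∑ k, v k = (μ * (N + 2) - 1) * v j) := by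
    intro j hj
    rw [harmA_mulVec_apply_of_ne hj, hi, add_zero, Pi.smul_apply, smul_eq_mul,
      div_eq_iff (by positivity), ← eq_sub_iff_add_eq]
    ring_nf
  refine ⟨fun h j hj => (hrow j hj).mp (congrFun h j), fun h => funext fun j => ?_⟩
  rcases eq_or_ne j i with rfl | hj
  · simp [harmA_mulVec_apply_self, hi]
  · exact (hrow j hj).mpr (h j hj)

theorem eq_zero_of_harmA_mulVec_eq_self (hi : v i = 0) (h : harmA N i *ᵥ v = v) : v = 0 := by
  have hoff : ∀ j, j ≠ i → (N + 1) * v j = ∑ k, v k := by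
    intro j hj
    have := (harmA_mulVec_eq_smul_iff_of_apply_eq_zero (μ := 1) hi).mp (by rwa [one_smul]) j hj
    linarith
  have hsum : ∑ k, v k = 0 := by
    have := sum_eq_add_card_sub_one_mul_of_forall_ne (f := fun j => ((N : ℝ) + 1) * v j) hoff
    rw [← Finset.mul_sum, hi, Fintype.card_fin] at this
    linarith
  ext j
  rcases eq_or_ne j i with rfl | hj
  · exact hi
  · exact (mul_eq_zero.mp ((hoff j hj).trans hsum)).resolve_left (by positivity)

theorem harmA_mulVec_eq_self_iff : harmA N i *ᵥ v = v ↔ ∃ c : ℝ, v = fun _ => c := by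
  constructor
  · intro h
    have hfixed : harmA N i *ᵥ (v - fun _ => v i) = v - fun _ => v i := by
      rw [mulVec_sub, h, harmA_mulVec_const]
    exact ⟨v i, sub_eq_zero.mp (eq_zero_of_harmA_mulVec_eq_self (sub_self _) hfixed)⟩
  · rintro ⟨c, rfl⟩
    exact harmA_mulVec_const i c

theorem harmA_mulVec_eq_natCast_div_smul_iff :
    harmA N i *ᵥ v = ((N : ℝ) / (N + 2)) • v ↔
      ∃ c : ℝ, v = c • fun j => if j = i then (0 : ℝ) else 1 := by
  have hμ : (N : ℝ) / (N + 2) ≠ 1 := by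
    rw [Ne, div_eq_one_iff_eq (by positivity)]
    linarith
  have hcoeff : (N : ℝ) / (N + 2) * (N + 2) - 1 = N - 1 := by field_simp
  constructor
  · intro h
    have hi := apply_eq_zero_of_harmA_mulVec_eq_smul hμ h
    rw [harmA_mulVec_eq_smul_iff_of_apply_eq_zero hi, hcoeff] at h
    refine ⟨(∑ k, v k) / (N - 1), funext fun j => ?_⟩
    rcases eq_or_ne j i with rfl | hj
    · simp [hi]
    · have hN : (N : ℝ) - 1 ≠ 0 := by
        have : 1 < N := by simpa using Fintype.one_lt_card_iff.mpr ⟨j, i, hj⟩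
        exact sub_ne_zero.mpr (by exact_mod_cast this.ne')
      simp [hj, h j hj, hN]
  · rintro ⟨c, hc⟩
    have hi : v i = 0 := by simp [hc]
    have hoff : ∀ j, j ≠ i → v j = c := fun j hj => by simp [hc, hj]
    rw [harmA_mulVec_eq_smul_iff_of_apply_eq_zero hi, hcoeff]
    intro j hj
    rw [sum_eq_add_card_sub_one_mul_of_forall_ne hoff, hi, hoff j hj, zero_add, Fintype.card_fin]

theorem harmA_mulVec_eq_one_div_smul_iff :
    harmA N i *ᵥ v = (1 / ((N : ℝ) + 2)) • v ↔ v i = 0 ∧ ∑ j, v j = 0 := by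
  have hμ : 1 / ((N : ℝ) + 2) ≠ 1 := by
    rw [Ne, div_eq_one_iff_eq (by positivity)]
    linarith [N.cast_nonneg (α := ℝ)]
  have heigen : v i = 0 →
      (harmA N i *ᵥ v = (1 / ((N : ℝ) + 2)) • v ↔ ∀ j, j ≠ i → ∑ k, v k = 0) := by
    intro hi
    rw [harmA_mulVec_eq_smul_iff_of_apply_eq_zero hi, div_mul_cancel₀ 1 (by positivity)]
    simp only [sub_self, zero_mul]
  constructor
  · intro h
    have hi := apply_eq_zero_of_harmA_mulVec_eq_smul hμ h
    refine ⟨hi, ?_⟩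
    rcases subsingleton_or_nontrivial (Fin N) with _ | _
    · rw [Fintype.sum_subsingleton v i, hi]
    · obtain ⟨j, hj⟩ := exists_ne i
      exact (heigen hi).mp h j hj
  · rintro ⟨hi, hsum⟩
    exact (heigen hi).mpr fun _ _ => hsum

end HarmonicExtension

theorem eigenspaces_of_harmA_general (N : ℕ) (i : Fin N) :
    (∀ v : Fin N → ℝ, (harmA N i).mulVec v = (1 : ℝ) • v ↔ ∃ c : ℝ, v = fun _ => c) ∧
    (∀ v : Fin N → ℝ, (harmA N i).mulVec v = ((N : ℝ) / (N + 2)) • v ↔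
      ∃ c : ℝ, v = c • fun j => if j = i then (0 : ℝ) else 1) ∧
    (∀ v : Fin N → ℝ, (harmA N i).mulVec v = (1 / ((N : ℝ) + 2)) • v ↔
      (v i = 0 ∧ ∑ j, v j = 0)) :=
  ⟨fun v => by rw [one_smul, harmA_mulVec_eq_self_iff],
    fun _ => harmA_mulVec_eq_natCast_div_smul_iff, fun _ => harmA_mulVec_eq_one_div_smul_iff⟩

theorem eigenspaces_of_harmA (N : ℕ) (hN : 3 ≤ N) (i : Fin N) :
    (∀ v : Fin N → ℝ, (harmA N i).mulVec v = (1 : ℝ) • v ↔ ∃ c : ℝ, v = fun _ => c) ∧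
    (∀ v : Fin N → ℝ, (harmA N i).mulVec v = ((N : ℝ) / (N + 2)) • v ↔
      ∃ c : ℝ, v = c • fun j => if j = i then (0 : ℝ) else 1) ∧
    (∀ v : Fin N → ℝ, (harmA N i).mulVec v = (1 / ((N : ℝ) + 2)) • v ↔
      (v i = 0 ∧ ∑ j, v j = 0)) :=
  eigenspaces_of_harmA_general N i
end

section
/- For each i ∈ {0,…,N−1}, the harmonic extension matrix A_i maps the line W = span{(1,…,1)} to itself, the induced linear map Ã_i on the quotient ℝ^N / W is invertible, and the inverse Ã_i^{−1} has spectrum exactly {(N+2)/N, N+2}, where the eigenspace for (N+2)/N has dimension 1 and the eigenspace for N+2 has dimension N−2. -/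
open Matrix Filter

/-!
The map induced by `A_i` on functions modulo constants is the dilatransvection
`x ↦ (N + 2)⁻¹ • (x + ∂_i x • e_i)`, where `∂_i` is the normal derivative at the vertex `i`. It
scales the hyperplane `ker ∂_i` by `(N + 2)⁻¹` and, since `∂_i e_i = N - 1`, the line through `e_i`
by `N / (N + 2)`; inverting inverts the eigenvalues and keeps the eigenspaces.
-/

section LinearAlgebra

open Module

theorem finrank_quotient_span_singleton_add_one {K V : Type*} [DivisionRing K] [AddCommGroup V]
    [Module K V] [FiniteDimensional K V] {v : V} (hv : v ≠ 0) :
    finrank K (V ⧸ Submodule.span K {v}) + 1 = finrank K V := by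
  rw [← finrank_span_singleton (K := K) hv, Submodule.finrank_quotient_add_finrank]

variable {K V : Type*} [Field K] [AddCommGroup V] [Module K V]

theorem eigenspace_smul (T : End K V) {c : K} (hc : c ≠ 0) (μ : K) :
    (c • T).eigenspace (c * μ) = T.eigenspace μ := by
  ext x
  simp only [End.mem_eigenspace_iff, LinearMap.smul_apply, mul_smul, smul_right_inj hc]

theorem eigenspace_units_inv (T : (End K V)ˣ) {μ : K} (hμ : μ ≠ 0) :
    End.eigenspace (↑T⁻¹ : End K V) μ⁻¹ = End.eigenspace (T : End K V) μ := by
  ext x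
  have hT : (↑T⁻¹ : End K V) ((T : End K V) x) = x := LinearMap.congr_fun T.inv_mul x
  have hT' : (T : End K V) ((↑T⁻¹ : End K V) x) = x := LinearMap.congr_fun T.mul_inv x
  rw [End.mem_eigenspace_iff, End.mem_eigenspace_iff]
  constructor <;> intro hx
  · rw [← inv_smul_eq_iff₀ hμ, ← map_smul, ← hx, hT']
  · rw [eq_inv_smul_iff₀ hμ, ← map_smul, ← hx, hT]

end LinearAlgebra

section Transvection

open Module

theorem isUnit_transvection {R V : Type*} [CommRing R] [AddCommGroup V] [Module R V]
    {f : Dual R V} {v : V} (h : IsUnit (1 + f v)) :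
    IsUnit (LinearMap.transvection f v : End R V) :=
  (End.isUnit_iff _).2 (LinearEquiv.dilatransvection h).bijective

variable {K V : Type*} [Field K] [AddCommGroup V] [Module K V] {f : Dual K V} {v : V}

theorem eigenspace_transvection_one (hv : v ≠ 0) :
    End.eigenspace (LinearMap.transvection f v) 1 = LinearMap.ker f := by
  ext x
  simp only [End.mem_eigenspace_iff, LinearMap.transvection.apply, one_smul, add_eq_left,
    smul_eq_zero_iff_left hv, LinearMap.mem_ker]

theorem eigenspace_transvection_one_add (hfv : f v ≠ 0) :
    End.eigenspace (LinearMap.transvection f v) (1 + f v) = Submodule.span K {v} := by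
  ext x
  rw [End.mem_eigenspace_iff, LinearMap.transvection.apply, add_smul, one_smul, add_right_inj,
    Submodule.mem_span_singleton]
  constructor
  · intro hx
    exact ⟨(f v)⁻¹ * f x, by rw [mul_smul, hx, inv_smul_smul₀ hfv]⟩
  · rintro ⟨a, rfl⟩
    rw [map_smul, smul_eq_mul, smul_smul, mul_comm]

theorem spectrum_transvection_subset :
    spectrum K (LinearMap.transvection f v : End K V) ⊆ {1 + f v, 1} := by
  intro μ hμ
  by_contra hne
  obtain ⟨hμv, hμ1⟩ : μ ≠ 1 + f v ∧ μ ≠ 1 := by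
    simpa only [Set.mem_insert_iff, Set.mem_singleton_iff, not_or] using hne
  have hμ1' : μ - 1 ≠ 0 := sub_ne_zero.2 hμ1
  have hcoeff : 1 + f (-(μ - 1)⁻¹ • v) = (μ - 1)⁻¹ * (μ - (1 + f v)) := by
    rw [map_smul, smul_eq_mul]
    field_simp
    ring
  have hresolvent : algebraMap K (End K V) μ - LinearMap.transvection f v =
      Units.mk0 (μ - 1) hμ1' • LinearMap.transvection f (-(μ - 1)⁻¹ • v) := by
    ext x
    simp only [LinearMap.sub_apply, algebraMap_end_apply, LinearMap.transvection.apply,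
      Units.smul_mk0, LinearMap.smul_apply]
    match_scalars <;> field_simp
  refine hμ ?_
  rw [spectrum.mem_resolventSet_iff, hresolvent]
  refine (isUnit_transvection (.mk0 _ ?_)).smul _
  rw [hcoeff]
  exact mul_ne_zero (inv_ne_zero hμ1') (sub_ne_zero.2 hμv)

theorem spectrum_transvection (hfv : f v ≠ 0) (hker : LinearMap.ker f ≠ ⊥) :
    spectrum K (LinearMap.transvection f v : End K V) = {1 + f v, 1} := by
  have hv : v ≠ 0 := fun h => hfv (by rw [h, map_zero])
  refine spectrum_transvection_subset.antisymm ?_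
  rintro μ (rfl | rfl) <;> apply End.HasEigenvalue.mem_spectrum <;> rw [End.hasEigenvalue_iff]
  · rwa [eigenspace_transvection_one_add hfv, Ne, Submodule.span_singleton_eq_bot]
  · rwa [eigenspace_transvection_one hv]

theorem spectrum_smul_transvection {c : K} (hc : c ≠ 0) (hfv : f v ≠ 0)
    (hker : LinearMap.ker f ≠ ⊥) :
    spectrum K (c • LinearMap.transvection f v : End K V) = {c * (1 + f v), c} := by
  change spectrum K (Units.mk0 c hc • LinearMap.transvection f v : End K V) = _
  rw [spectrum.unit_smul_eq_smul, spectrum_transvection hfv hker, ← Set.image_smul, Set.image_pair]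
  simp only [Units.smul_mk0, smul_eq_mul, mul_one]

end Transvection

section NormalDerivative

open Module

variable (R : Type*) [CommRing R] {ι : Type*} [Fintype ι]

/-- The normal derivative `u ↦ ∑ k, (u i - u k)` at the vertex `i` of the complete graph on `ι`.
It kills constants, so it is encoded as a functional on functions modulo constants. -/
def normalDerivative (i : ι) : Dual R ((ι → R) ⧸ Submodule.span R {(fun _ => 1 : ι → R)}) :=
  Submodule.liftQ _
    { toFun := fun u => ∑ k, (u i - u k)
      map_add' := fun u w => by
        simp only [Pi.add_apply, add_sub_add_comm, Finset.sum_add_distrib]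
      map_smul' := fun c u => by
        simp only [Pi.smul_apply, ← smul_sub, Finset.smul_sum, RingHom.id_apply] } <| by
    simp [Submodule.span_singleton_le_iff_mem]

theorem normalDerivative_mk (i : ι) (u : ι → R) :
    normalDerivative R i (Submodule.Quotient.mk u) = ∑ k, (u i - u k) :=
  rfl

theorem normalDerivative_mk_single_self [DecidableEq ι] (i : ι) :
    normalDerivative R i (Submodule.Quotient.mk (Pi.single i 1)) = Fintype.card ι - 1 := by
  simp [normalDerivative_mk]

theorem normalDerivative_ne_zero [Nontrivial R] [Nontrivial ι] (i : ι) :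
    normalDerivative R i ≠ 0 := by
  classical
  obtain ⟨k, hki⟩ := exists_ne i
  intro h
  have hk : normalDerivative R i (Submodule.Quotient.mk (Pi.single k 1)) = -1 := by
    simp [normalDerivative_mk, hki.symm]
  simp [h] at hk

theorem finrank_ker_normalDerivative_add_two (K : Type*) [Field K] [Nontrivial ι] (i : ι) :
    finrank K (LinearMap.ker (normalDerivative K i)) + 2 = Fintype.card ι := by
  have hone : (fun _ => 1 : ι → K) ≠ 0 := fun h => one_ne_zero (congrFun h i)
  rw [← finrank_fintype_fun_eq_card K, ← finrank_quotient_span_singleton_add_one hone,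
    ← Dual.finrank_ker_add_one_of_ne_zero (normalDerivative_ne_zero K i)]

end NormalDerivative

section HarmonicExtension

variable {N : ℕ} (i : Fin N)

theorem harmA_eq_smul_one_add_vecMulVec :
    harmA N i = ((N : ℝ) + 2)⁻¹ • (1 + vecMulVec (Pi.single i 1) ((N : ℝ) • Pi.single i 1 - 1)
      + vecMulVec (fun _ => 1) (Pi.single i 1 + 1)) := by
  have hN2 : (N : ℝ) + 2 ≠ 0 := by positivity
  ext j k
  by_cases hj : j = i <;> by_cases hk : k = i <;> by_cases hjk : j = k <;>
    simp_all [harmA, vecMulVec_apply, one_apply] <;> field_simp <;> ring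

theorem harmA_mulVec (u : Fin N → ℝ) :
    harmA N i *ᵥ u = ((N : ℝ) + 2)⁻¹ • (u + (∑ k, (u i - u k)) • Pi.single i 1
      + (u i + ∑ k, u k) • fun _ => 1) := by
  simp only [harmA_eq_smul_one_add_vecMulVec, smul_mulVec, add_mulVec, one_mulVec,
    vecMulVec_mulVec, op_smul_eq_smul]
  simp [sub_dotProduct, add_dotProduct, smul_dotProduct, one_dotProduct]

theorem harmA_mulVec_one : harmA N i *ᵥ (fun _ => 1) = fun _ => 1 := by
  have hN2 : (N : ℝ) + 2 ≠ 0 := by positivity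
  have hsum : 1 + (1 + (N : ℝ)) = N + 2 := by ring
  ext j
  simp [harmA_mulVec, hsum, hN2]

theorem span_one_le_comap_harmA :
    Submodule.span ℝ {(fun _ => 1 : Fin N → ℝ)} ≤
      (Submodule.span ℝ {(fun _ => 1 : Fin N → ℝ)}).comap (mulVecLin (harmA N i)) := by
  rw [Submodule.span_singleton_le_iff_mem, Submodule.mem_comap, mulVecLin_apply, harmA_mulVec_one]
  exact Submodule.mem_span_singleton_self _

/-- The map `Ã_i` induced by the harmonic extension matrix `A_i` on functions modulo constants. -/
noncomputable def harmAQuotient :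
    Module.End ℝ ((Fin N → ℝ) ⧸ Submodule.span ℝ {(fun _ => 1 : Fin N → ℝ)}) :=
  Submodule.mapQ _ _ (mulVecLin (harmA N i)) (span_one_le_comap_harmA i)

theorem harmAQuotient_eq_smul_transvection :
    harmAQuotient i = ((N : ℝ) + 2)⁻¹ •
      LinearMap.transvection (normalDerivative ℝ i) (Submodule.Quotient.mk (Pi.single i 1)) := by
  have hone : (Submodule.Quotient.mk (fun _ => 1) :
      (Fin N → ℝ) ⧸ Submodule.span ℝ {(fun _ => 1 : Fin N → ℝ)}) = 0 :=
    (Submodule.Quotient.mk_eq_zero _).2 (Submodule.mem_span_singleton_self _)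
  refine Submodule.linearMap_qext _ (LinearMap.ext fun u => ?_)
  simp only [harmAQuotient, LinearMap.comp_apply, Submodule.mkQ_apply, Submodule.mapQ_apply,
    mulVecLin_apply, harmA_mulVec, Submodule.Quotient.mk_smul, Submodule.Quotient.mk_add, hone,
    smul_zero, add_zero, LinearMap.smul_apply, LinearMap.transvection.apply, normalDerivative_mk]

theorem one_add_normalDerivative_mk_single_self :
    1 + normalDerivative ℝ i (Submodule.Quotient.mk (Pi.single i 1)) = N := by
  rw [normalDerivative_mk_single_self, Fintype.card_fin, add_sub_cancel]

theorem isUnit_harmAQuotient : IsUnit (harmAQuotient i) := by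
  have hN : (N : ℝ) ≠ 0 := Nat.cast_ne_zero.2 i.pos.ne'
  have hN2 : (N : ℝ) + 2 ≠ 0 := by positivity
  rw [harmAQuotient_eq_smul_transvection]
  refine (isUnit_transvection (.mk0 _ ?_)).smul (Units.mk0 _ (inv_ne_zero hN2))
  rwa [one_add_normalDerivative_mk_single_self]

theorem normalDerivative_mk_single_self_ne_zero (hN : 2 ≤ N) :
    normalDerivative ℝ i (Submodule.Quotient.mk (Pi.single i 1)) ≠ 0 := by
  rw [normalDerivative_mk_single_self, Fintype.card_fin, sub_ne_zero, Nat.cast_ne_one]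
  lia

theorem mk_single_ne_zero (hN : 2 ≤ N) :
    (Submodule.Quotient.mk (Pi.single i 1) :
      (Fin N → ℝ) ⧸ Submodule.span ℝ {(fun _ => 1 : Fin N → ℝ)}) ≠ 0 := fun h =>
  normalDerivative_mk_single_self_ne_zero i hN (by rw [h, map_zero])

theorem finrank_ker_normalDerivative (hN : 2 ≤ N) :
    Module.finrank ℝ (LinearMap.ker (normalDerivative ℝ i)) = N - 2 := by
  have : Nontrivial (Fin N) := Fin.nontrivial_iff_two_le.2 hN
  have h := finrank_ker_normalDerivative_add_two ℝ i
  rw [Fintype.card_fin] at h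
  lia

theorem eigenspace_harmAQuotient_div (hN : 2 ≤ N) :
    (harmAQuotient i).eigenspace (N / ((N : ℝ) + 2)) =
      Submodule.span ℝ {Submodule.Quotient.mk (Pi.single i 1)} := by
  have hN2 : (N : ℝ) + 2 ≠ 0 := by positivity
  rw [harmAQuotient_eq_smul_transvection, div_eq_inv_mul, eigenspace_smul _ (inv_ne_zero hN2),
    ← one_add_normalDerivative_mk_single_self i,
    eigenspace_transvection_one_add (normalDerivative_mk_single_self_ne_zero i hN)]

theorem eigenspace_harmAQuotient_inv (hN : 2 ≤ N) :
    (harmAQuotient i).eigenspace ((N : ℝ) + 2)⁻¹ = LinearMap.ker (normalDerivative ℝ i) := by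
  have hN2 : (N : ℝ) + 2 ≠ 0 := by positivity
  rw [harmAQuotient_eq_smul_transvection, ← eigenspace_transvection_one (mk_single_ne_zero i hN),
    ← eigenspace_smul _ (inv_ne_zero hN2) 1, mul_one]

theorem spectrum_harmAQuotient (hN : 3 ≤ N) :
    spectrum ℝ (harmAQuotient i) = {N / ((N : ℝ) + 2), ((N : ℝ) + 2)⁻¹} := by
  have hN2 : (N : ℝ) + 2 ≠ 0 := by positivity
  have hker : LinearMap.ker (normalDerivative ℝ i) ≠ ⊥ := by
    rw [Ne, ← Submodule.finrank_eq_zero (R := ℝ), finrank_ker_normalDerivative i (by lia)]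
    lia
  rw [harmAQuotient_eq_smul_transvection, spectrum_smul_transvection (inv_ne_zero hN2)
    (normalDerivative_mk_single_self_ne_zero i (by lia)) hker,
    one_add_normalDerivative_mk_single_self, div_eq_inv_mul]

end HarmonicExtension

theorem quotient_map_spectrum (N : ℕ) (hN : 3 ≤ N) (i : Fin N) :
    ∃ h : (Submodule.span ℝ {(fun _ => 1 : Fin N → ℝ)}) ≤
        (Submodule.span ℝ {(fun _ => 1 : Fin N → ℝ)}).comap (Matrix.mulVecLin (harmA N i)),
      ∃ B : Module.End ℝ ((Fin N → ℝ) ⧸ Submodule.span ℝ {(fun _ => 1 : Fin N → ℝ)}),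
        (Submodule.mapQ _ _ (Matrix.mulVecLin (harmA N i)) h) ∘ₗ B = LinearMap.id ∧
        B ∘ₗ (Submodule.mapQ _ _ (Matrix.mulVecLin (harmA N i)) h) = LinearMap.id ∧
        spectrum ℝ B = {((N : ℝ) + 2) / N, (N : ℝ) + 2} ∧
        Module.finrank ℝ (Module.End.eigenspace B (((N : ℝ) + 2) / N)) = 1 ∧
        Module.finrank ℝ (Module.End.eigenspace B ((N : ℝ) + 2)) = N - 2 := by
  have hN2 : (N : ℝ) + 2 ≠ 0 := by positivity
  have hdiv : (N : ℝ) / (N + 2) ≠ 0 := by positivity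
  obtain ⟨T, hT⟩ := isUnit_harmAQuotient i
  refine ⟨span_one_le_comap_harmA i, ↑T⁻¹, ?_, ?_, ?_, ?_, ?_⟩
  · change harmAQuotient i * ↑T⁻¹ = 1
    rw [← hT, T.mul_inv]
  · change ↑T⁻¹ * harmAQuotient i = 1
    rw [← hT, T.inv_mul]
  · rw [← spectrum.map_inv, hT, spectrum_harmAQuotient i hN, Set.inv_insert, Set.inv_singleton,
      inv_div, inv_inv]
  · rw [← inv_div, eigenspace_units_inv T hdiv, hT, eigenspace_harmAQuotient_div i (by lia),
      finrank_span_singleton (mk_single_ne_zero i (by lia))]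
  · rw [← inv_inv ((N : ℝ) + 2), eigenspace_units_inv T (inv_ne_zero hN2), hT,
      eigenspace_harmAQuotient_inv i (by lia), finrank_ker_normalDerivative i (by lia)]
end

section
/- If w : {1,…,N−1} → {0,…,N−1} is injective (i.e., w_1…w_{N−1} is an (N−1)-block) and v ∈ ℝ^N satisfies A_{w_j} v = (1/(N+2)) v for every j ∈ {1,…,N−1}, then v = 0. In other words, the harmonic extension matrices indexed by the letters of an (N−1)-block have no common nonzero eigenvector with eigenvalue 1/(N+2). -/
open Matrix Filter

/-!
For each `i`, the `1 / (N + 2)`-eigenspace of `A_i` is `{v | v i = 0, ∑ k, v k = 0}`: row `i` of the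
eigenvalue equation reads `v i = v i / (N + 2)`, and row `j ≠ i` reads
`∑ k, v k + v i + v j = v j`. The letters of an `(N - 1)`-block omit a single vertex, so a common
eigenvector is supported on that vertex, and having sum zero it vanishes.
-/

theorem subsingleton_compl_range_of_injective {α β : Type*} [Finite β] {f : α → β}
    (hf : Function.Injective f) (hcard : Nat.card β ≤ Nat.card α + 1) :
    (Set.range f)ᶜ.Subsingleton := by
  rw [← Set.ncard_le_one_iff_subsingleton, Set.ncard_compl, Set.ncard_range_of_injective hf]
  omega

theorem eq_zero_of_support_subsingleton_of_sum_eq_zero {ι M : Type*} [Fintype ι] [AddCommMonoid M]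
    {v : ι → M} (hsupp : v.support.Subsingleton) (hsum : ∑ k, v k = 0) : v = 0 := by
  by_contra hv
  obtain ⟨m, hm⟩ := Function.ne_iff.mp hv
  have hother : ∀ k ≠ m, v k = 0 := fun k hk => by_contra fun hvk => hk (hsupp hvk hm)
  exact hm ((Fintype.sum_eq_single m hother).symm.trans hsum)

namespace harmA

variable {N : ℕ} {i j : Fin N}

theorem mulVec_apply_self (v : Fin N → ℝ) : (harmA N i *ᵥ v) i = v i := by
  simp [mulVec, dotProduct, harmA]

theorem apply_of_ne (hj : j ≠ i) (k : Fin N) :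
    harmA N i j k = (1 + (if i = k then 1 else 0) + (if j = k then 1 else 0)) / (N + 2) := by
  rcases eq_or_ne k i with rfl | hk
  · norm_num [harmA, hj]
  · simp [harmA, hj, hk, hk.symm]

theorem mulVec_apply_of_ne (hj : j ≠ i) (v : Fin N → ℝ) :
    (harmA N i *ᵥ v) j = (∑ k, v k + v i + v j) / (N + 2) := by
  simp [mulVec, dotProduct, apply_of_ne hj, div_mul_eq_mul_div, ← Finset.sum_div, add_mul,
    Finset.sum_add_distrib]

theorem mulVec_eq_one_div_smul_iff {v : Fin N → ℝ} :
    harmA N i *ᵥ v = (1 / ((N : ℝ) + 2)) • v ↔ v i = 0 ∧ ∑ k, v k = 0 := by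
  have hN : (N : ℝ) + 2 ≠ 0 := by positivity
  constructor
  · intro h
    have hvi : v i = 0 := by
      have row_i : v i = 1 / ((N : ℝ) + 2) * v i := by
        simpa only [mulVec_apply_self, Pi.smul_apply, smul_eq_mul] using congrFun h i
      have hN1 : (N : ℝ) + 1 ≠ 0 := by positivity
      field_simp at row_i
      exact (mul_eq_zero_iff_left hN1).mp (by linarith)
    refine ⟨hvi, ?_⟩
    by_cases hne : ∃ j, j ≠ i
    · obtain ⟨j, hj⟩ := hne
      have row_j := congrFun h j
      rw [mulVec_apply_of_ne hj, hvi, Pi.smul_apply, smul_eq_mul] at row_j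
      field_simp at row_j
      linarith
    · push Not at hne
      exact Finset.sum_eq_zero fun k _ => hne k ▸ hvi
  · rintro ⟨hvi, hsum⟩
    ext j
    rcases eq_or_ne j i with rfl | hj
    · simp [mulVec_apply_self, hvi]
    · simp [mulVec_apply_of_ne hj, hvi, hsum, div_eq_inv_mul]

end harmA

theorem no_common_small_eigenvector_of_block_general {N : ℕ} {ι : Type*} [Nonempty ι]
    {w : ι → Fin N} (hw : (Set.range w)ᶜ.Subsingleton) {v : Fin N → ℝ}
    (hv : ∀ j, harmA N (w j) *ᵥ v = (1 / ((N : ℝ) + 2)) • v) : v = 0 := by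
  have hsupp : v.support ⊆ (Set.range w)ᶜ := by
    rintro _ hk ⟨j, rfl⟩
    exact hk (harmA.mulVec_eq_one_div_smul_iff.mp (hv j)).1
  obtain ⟨j⟩ := ‹Nonempty ι›
  exact eq_zero_of_support_subsingleton_of_sum_eq_zero (hw.anti hsupp)
    (harmA.mulVec_eq_one_div_smul_iff.mp (hv j)).2

theorem no_common_small_eigenvector_of_block (N : ℕ) (hN : 3 ≤ N)
    (w : Fin (N - 1) → Fin N) (hw : Function.Injective w) (v : Fin N → ℝ)
    (hv : ∀ j : Fin (N - 1), (harmA N (w j)).mulVec v = (1 / ((N : ℝ) + 2)) • v) :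
    v = 0 := by
  have : Nonempty (Fin (N - 1)) := ⟨⟨0, by omega⟩⟩
  exact no_common_small_eigenvector_of_block_general
    (subsingleton_compl_range_of_injective hw (by simp only [Nat.card_fin]; omega)) hv
end

section
/- There exists β with 0 < β < 1 such that for every injective map w : {1,…,N−1} → {0,…,N−1} (i.e., every (N−1)-block w_1…w_{N−1}) and every v ∈ ℝ^N, E(A_{w_{N−1}}^{−1} A_{w_{N−2}}^{−1} ⋯ A_{w_1}^{−1} v) ≤ ((N+2)β)^{2(N−1)} E(v); equivalently, the E-operator norm of the product A_{w_{N−1}}^{−1}⋯A_{w_1}^{−1} is at most ((N+2)β)^{N−1} for a uniform β < 1. -/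
open Matrix Filter

/-- Product `A_{w_m}⁻¹ ⋯ A_{w_1}⁻¹` of inverse harmonic extension matrices
along a finite word `w = w_1 ⋯ w_m` (zero-indexed as `w 0, …, w (m-1)`). -/
noncomputable def wordProdInv (N : ℕ) {m : ℕ} (w : Fin m → Fin N) :
    Matrix (Fin N) (Fin N) ℝ :=
  ((List.ofFn fun j => (harmA N (w j))⁻¹).reverse).prod

/-- Product `A_{ω_n}⁻¹ ⋯ A_{ω_1}⁻¹` along the first `n` letters of the infinite
word `ω = ω_1 ω_2 ⋯` (zero-indexed, so `ω_1 = ω 0`). -/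
noncomputable def prefixProdInv (N : ℕ) (ω : ℕ → Fin N) (n : ℕ) :
    Matrix (Fin N) (Fin N) ℝ :=
  wordProdInv N fun j : Fin n => ω j

open scoped Classical in
/-- Block counting function `C_N(ω,n)`: the number of positions `i` with
`i + (N-2) ≤ n` (one-indexed) at which the `N-1` letters `ω_i, …, ω_{i+N-2}`
are pairwise distinct.  Here `ω` is zero-indexed, so `ω_1 = ω 0`. -/
noncomputable def blockCount (N : ℕ) (ω : ℕ → Fin N) (n : ℕ) : ℕ :=
  ((Finset.range n).filter fun i =>
    i + (N - 2) < n ∧ Function.Injective fun j : Fin (N - 1) => ω (i + j)).card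

/-!
Modulo constants and a factor `N + 2`, the inverse `A_i⁻¹` replaces the `i`-th coordinate of a
vector by the mean of all coordinates. The energy lost by this replacement is `N + 1` times the
square of the deviation from the mean at `i`. The other deviations move by no more than the one that
is lost, so a word that loses little energy must have started from a vector whose deviations at all
its letters are small. Since deviations sum to zero, a word missing at most one letter can lose
little energy only if there was little to begin with, and this gives an explicit contraction factor.
-/

open Finset
open Fintype (balance balance_apply sum_balance)
open scoped BigOperators

section Energy

variable {N : ℕ}

lemma energy_self_eq_mul_sum_sq_sub (v : Fin N → ℝ) :
    energy N v v = N * ∑ k, v k ^ 2 - (∑ k, v k) ^ 2 := by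
  have symmetrized : 2 * energy N v v = ∑ k, ∑ l, (v k - v l) ^ 2 := by
    rw [two_mul]
    nth_rw 2 [energy]
    rw [sum_comm]
    simp only [energy, ← sum_add_distrib]
    refine sum_congr rfl fun k _ => sum_congr rfl fun l _ => ?_
    rcases lt_trichotomy k l with h | rfl | h
    · simp only [h, h.not_gt, if_true, if_false]; ring
    · simp
    · simp only [h, h.not_gt, if_true, if_false]; ring
  have expanded : ∑ k, ∑ l, (v k - v l) ^ 2 = 2 * (N * ∑ k, v k ^ 2 - (∑ k, v k) ^ 2) := by
    simp only [sub_sq, mul_assoc, sum_sub_distrib, sum_add_distrib, ← mul_sum, sum_const,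
      card_univ, Fintype.card_fin, nsmul_eq_mul, ← sum_mul]
    ring
  linarith

lemma energy_self_eq_mul_sum_balance_sq (v : Fin N → ℝ) :
    energy N v v = N * ∑ k, balance v k ^ 2 := by
  have shift_invariant : energy N v v = energy N (balance v) (balance v) := by
    simp only [energy, balance_apply, sub_sub_sub_cancel_right]
  rw [shift_invariant, energy_self_eq_mul_sum_sq_sub, sum_balance]
  ring

lemma energy_self_nonneg (v : Fin N → ℝ) : 0 ≤ energy N v v := by
  rw [energy_self_eq_mul_sum_balance_sq]
  positivity

lemma energy_self_le_sq_mul_sum_erase (v : Fin N → ℝ) (p : Fin N) :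
    energy N v v ≤ N ^ 2 * ∑ k ∈ univ.erase p, balance v k ^ 2 := by
  have balance_eq : balance v p = -∑ k ∈ univ.erase p, balance v k := by
    rw [eq_neg_iff_add_eq_zero, add_sum_erase _ _ (mem_univ p), sum_balance]
  have sq_le : balance v p ^ 2 ≤ (N - 1) * ∑ k ∈ univ.erase p, balance v k ^ 2 := by
    rw [balance_eq, neg_sq]
    simpa [card_erase_of_mem, Nat.cast_pred p.pos] using
      sq_sum_le_card_mul_sum_sq (s := univ.erase p) (f := balance v)
  calc energy N v v
      = N * (balance v p ^ 2 + ∑ k ∈ univ.erase p, balance v k ^ 2) := by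
        rw [energy_self_eq_mul_sum_balance_sq, add_sum_erase _ (balance v · ^ 2) (mem_univ p)]
    _ ≤ N * ((N - 1) * ∑ k ∈ univ.erase p, balance v k ^ 2
          + ∑ k ∈ univ.erase p, balance v k ^ 2) := by gcongr
    _ = N ^ 2 * ∑ k ∈ univ.erase p, balance v k ^ 2 := by ring

end Energy

section HarmonicExtension

variable {N : ℕ} (i : Fin N) (v : Fin N → ℝ)

lemma harmA_mulVec_apply (j : Fin N) :
    (harmA N i *ᵥ v) j = if j = i then v i else (v i + v j + ∑ k, v k) / (N + 2) := by
  split_ifs with hji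
  · simp [harmA, mulVec, dotProduct, hji]
  · have entry (k : Fin N) : harmA N i j k * v k =
        ((if k = i then v k else 0) + (if j = k then v k else 0) + v k) / (N + 2) := by
      rw [harmA, of_apply, if_neg hji]
      rcases eq_or_ne k i with rfl | hki
      · simp only [hji, if_true, if_false]; ring
      · simp only [hki, if_false]; split_ifs <;> ring
    simp only [mulVec, dotProduct, entry, ← sum_div, sum_add_distrib, sum_ite_eq,
      sum_ite_eq', mem_univ, if_true]

lemma harmA_mulVec_smul_sub_single_add_const :
    harmA N i *ᵥ (((N : ℝ) + 2) • (v - Pi.single i (balance v i)) +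
      Function.const _ (v i - (N + 2) * 𝔼 k, v k)) = v := by
  have two_add_ne : (N : ℝ) + 2 ≠ 0 := by positivity
  have sum_eq : ∑ k, v k = N * 𝔼 k, v k := by
    simpa using (Fintype.card_mul_expect v).symm
  ext j
  rw [harmA_mulVec_apply]
  rcases eq_or_ne j i with rfl | hji
  · simp [balance_apply]
  · simp only [hji, if_false, balance_apply, Pi.add_apply, Pi.smul_apply, Pi.sub_apply,
      Pi.single_eq_same, Pi.single_eq_of_ne hji, smul_eq_mul, Function.const_apply,
      sum_add_distrib, ← mul_sum, sum_sub_distrib, sum_eq, sum_pi_single', mem_univ, if_true,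
      sum_const, card_univ, Fintype.card_fin, nsmul_eq_mul]
    field_simp
    ring

lemma harmA_inv_mulVec :
    (harmA N i)⁻¹ *ᵥ v = ((N : ℝ) + 2) • (v - Pi.single i (balance v i)) +
      Function.const _ (v i - (N + 2) * 𝔼 k, v k) := by
  have isUnit_harmA : IsUnit (harmA N i) :=
    mulVec_surjective_iff_isUnit.1 fun u => ⟨_, harmA_mulVec_smul_sub_single_add_const i u⟩
  conv_lhs => rw [← harmA_mulVec_smul_sub_single_add_const i v]
  rw [mulVec_mulVec, nonsing_inv_mul _ ((isUnit_iff_isUnit_det _).1 isUnit_harmA), one_mulVec]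

lemma balance_harmA_inv_mulVec (k : Fin N) :
    balance ((harmA N i)⁻¹ *ᵥ v) k =
      (N + 2) * (balance v k - (if k = i then balance v i else 0) + balance v i / N) := by
  have : Nonempty (Fin N) := ⟨i⟩
  rw [harmA_inv_mulVec]
  simp only [balance_apply, Pi.add_apply, Pi.smul_apply, Pi.sub_apply, Pi.single_apply,
    smul_eq_mul, Function.const_apply, expect_add_distrib, ← mul_expect, expect_sub_distrib,
    Fintype.expect_const, Fintype.expect_ite_eq', Fintype.card_fin, NNRat.smul_def,
    NNRat.cast_inv, NNRat.cast_natCast]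
  ring

lemma energy_harmA_inv_mulVec :
    energy N ((harmA N i)⁻¹ *ᵥ v) ((harmA N i)⁻¹ *ᵥ v) =
      (N + 2) ^ 2 * (energy N v v - (N + 1) * balance v i ^ 2) := by
  have N_ne : (N : ℝ) ≠ 0 := Nat.cast_ne_zero.2 i.pos.ne'
  set d := balance v with hd
  have sum_d : ∑ k, d k = 0 := sum_balance v
  have expanded (k : Fin N) : (d k - (if k = i then d i else 0) + d i / N) ^ 2 =
      d k ^ 2 + 2 * (d i / N) * d k + (d i / N) ^ 2
        - if k = i then d i ^ 2 + 2 * d i * (d i / N) else 0 := by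
    split_ifs with hki
    · subst hki; ring
    · ring
  simp only [energy_self_eq_mul_sum_balance_sq, balance_harmA_inv_mulVec, ← hd, mul_pow, expanded,
    ← mul_sum, sum_sub_distrib, sum_add_distrib, sum_d, sum_const, sum_ite_eq',
    mem_univ, if_true, card_univ, Fintype.card_fin, nsmul_eq_mul]
  field_simp
  ring

lemma sq_mul_balance_le_harmA_inv (k : Fin N) :
    ((N + 2) * balance v k) ^ 2 ≤
      2 * (((N + 2) * balance v i) ^ 2 + balance ((harmA N i)⁻¹ *ᵥ v) k ^ 2) := by
  set c : ℝ := (if k = i then 1 else 0) - (N : ℝ)⁻¹ with hc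
  have c_sq_le : c ^ 2 ≤ 1 := by
    have inv_nonneg : (0 : ℝ) ≤ (N : ℝ)⁻¹ := by positivity
    have inv_le_one : (N : ℝ)⁻¹ ≤ 1 := inv_le_one_of_one_le₀ (Nat.one_le_cast.2 i.pos)
    rw [sq_le_one_iff_abs_le_one, abs_le, hc]
    split_ifs <;> constructor <;> linarith
  calc ((N + 2) * balance v k) ^ 2
      = (c * ((N + 2) * balance v i) + balance ((harmA N i)⁻¹ *ᵥ v) k) ^ 2 := by
        rw [balance_harmA_inv_mulVec, hc]
        split_ifs <;> ring
    _ ≤ 2 * ((c * ((N + 2) * balance v i)) ^ 2 + balance ((harmA N i)⁻¹ *ᵥ v) k ^ 2) := add_sq_le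
    _ ≤ 2 * (((N + 2) * balance v i) ^ 2 + balance ((harmA N i)⁻¹ *ᵥ v) k ^ 2) := by
        rw [mul_pow c]
        gcongr
        exact mul_le_of_le_one_left (sq_nonneg _) c_sq_le

end HarmonicExtension

section Words

variable {N m : ℕ}

lemma wordProdInv_succ (w : Fin (m + 1) → Fin N) :
    wordProdInv N w = wordProdInv N (Fin.tail w) * (harmA N (w 0))⁻¹ := by
  simp [wordProdInv, List.ofFn_succ, Fin.tail]

/-- The energy lost along the word `w` when starting from `v`, measured after the `m` inverse steps,
against the growth by `(N + 2) ^ 2` per step of a vector that loses none. -/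
noncomputable def energyLoss (w : Fin m → Fin N) (v : Fin N → ℝ) : ℝ :=
  (N + 2) ^ (2 * m) * energy N v v - energy N (wordProdInv N w *ᵥ v) (wordProdInv N w *ᵥ v)

lemma energyLoss_zero (w : Fin 0 → Fin N) (v : Fin N → ℝ) : energyLoss w v = 0 := by
  simp [energyLoss, wordProdInv]

lemma energyLoss_succ (w : Fin (m + 1) → Fin N) (v : Fin N → ℝ) :
    energyLoss w v = (N + 1) * (N + 2) ^ (2 * (m + 1)) * balance v (w 0) ^ 2 +
      energyLoss (Fin.tail w) ((harmA N (w 0))⁻¹ *ᵥ v) := by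
  rw [energyLoss, energyLoss, wordProdInv_succ, ← mulVec_mulVec, energy_harmA_inv_mulVec]
  ring

lemma energyLoss_nonneg (w : Fin m → Fin N) (v : Fin N → ℝ) : 0 ≤ energyLoss w v := by
  induction m generalizing v with
  | zero => rw [energyLoss_zero]
  | succ m ih =>
    rw [energyLoss_succ]
    exact add_nonneg (by positivity) (ih _ _)

lemma balance_sq_le_energyLoss (w : Fin m → Fin N) (v : Fin N → ℝ) (j : Fin m) :
    (N + 1) * (N + 2) ^ (2 * m) * balance v (w j) ^ 2 ≤ 2 ^ m * energyLoss w v := by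
  induction m generalizing v with
  | zero => exact j.elim0
  | succ m ih =>
    set u := (harmA N (w 0))⁻¹ *ᵥ v with u_def
    set headLoss := (N + 1) * (N + 2) ^ (2 * (m + 1)) * balance v (w 0) ^ 2 with headLoss_def
    have headLoss_nonneg : 0 ≤ headLoss := by positivity
    have tailLoss_nonneg := energyLoss_nonneg (Fin.tail w) u
    rw [energyLoss_succ, ← headLoss_def, ← u_def]
    cases j using Fin.cases with
    | zero =>
      calc headLoss ≤ headLoss + energyLoss (Fin.tail w) u := le_add_of_nonneg_right tailLoss_nonneg
        _ ≤ 2 ^ (m + 1) * (headLoss + energyLoss (Fin.tail w) u) :=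
          le_mul_of_one_le_left (by positivity) (one_le_pow₀ one_le_two)
    | succ j =>
      calc (N + 1) * (N + 2) ^ (2 * (m + 1)) * balance v (w j.succ) ^ 2
          = (N + 1) * (N + 2) ^ (2 * m) * ((N + 2) * balance v (w j.succ)) ^ 2 := by ring
        _ ≤ (N + 1) * (N + 2) ^ (2 * m) *
              (2 * (((N + 2) * balance v (w 0)) ^ 2 + balance u (w j.succ) ^ 2)) := by
          gcongr
          exact sq_mul_balance_le_harmA_inv (w 0) v (w j.succ)
        _ = 2 * (headLoss + (N + 1) * (N + 2) ^ (2 * m) * balance u (Fin.tail w j) ^ 2) := by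
          rw [headLoss_def, Fin.tail]; ring
        _ ≤ 2 * (2 ^ m * headLoss + 2 ^ m * energyLoss (Fin.tail w) u) := by
          refine mul_le_mul_of_nonneg_left (add_le_add ?_ (ih (Fin.tail w) u j)) zero_le_two
          exact le_mul_of_one_le_left headLoss_nonneg (one_le_pow₀ one_le_two)
        _ = 2 ^ (m + 1) * (headLoss + energyLoss (Fin.tail w) u) := by ring

lemma energy_le_energyLoss {w : Fin m → Fin N} {p : Fin N} (hw : {p}ᶜ ⊆ Set.range w)
    (v : Fin N → ℝ) :
    (N + 1) * ((N + 2) ^ (2 * m) * energy N v v) ≤ 2 ^ m * N ^ 3 * energyLoss w v := by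
  have loss_nonneg := energyLoss_nonneg w v
  have balance_sq_le : ∀ k ∈ univ.erase p,
      (N + 1) * (N + 2) ^ (2 * m) * balance v k ^ 2 ≤ 2 ^ m * energyLoss w v := by
    intro k hk
    obtain ⟨j, rfl⟩ := hw (ne_of_mem_erase hk)
    exact balance_sq_le_energyLoss w v j
  calc (N + 1) * ((N + 2) ^ (2 * m) * energy N v v)
      ≤ (N + 1) * ((N + 2) ^ (2 * m) * (N ^ 2 * ∑ k ∈ univ.erase p, balance v k ^ 2)) := by
        gcongr
        exact energy_self_le_sq_mul_sum_erase v p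
    _ = N ^ 2 * ∑ k ∈ univ.erase p, (N + 1) * (N + 2) ^ (2 * m) * balance v k ^ 2 := by
        rw [← mul_sum]; ring
    _ ≤ N ^ 2 * (#(univ.erase p) • (2 ^ m * energyLoss w v)) := by
        gcongr
        exact sum_le_card_nsmul _ _ _ balance_sq_le
    _ ≤ N ^ 2 * (N * (2 ^ m * energyLoss w v)) := by
        rw [nsmul_eq_mul]
        gcongr
        exact (card_le_univ _).trans_eq (Fintype.card_fin N)
    _ = 2 ^ m * N ^ 3 * energyLoss w v := by ring

lemma energy_wordProdInv_mulVec_le {w : Fin m → Fin N} {p : Fin N} (hw : {p}ᶜ ⊆ Set.range w)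
    (v : Fin N → ℝ) :
    energy N (wordProdInv N w *ᵥ v) (wordProdInv N w *ᵥ v) ≤
      2 ^ m * N ^ 3 / (2 ^ m * N ^ 3 + (N + 1)) * ((N + 2) ^ (2 * m) * energy N v v) := by
  have scaled_loss_nonneg : 0 ≤ (N + 1) * energyLoss w v :=
    mul_nonneg (by positivity) (energyLoss_nonneg w v)
  have energy_le := energy_le_energyLoss hw v
  rw [energyLoss] at scaled_loss_nonneg energy_le
  rw [div_mul_eq_mul_div, le_div_iff₀ (by positivity)]
  linarith

end Words

lemma exists_lt_one_le_pow {K : Type*} [Field K] [LinearOrder K] [IsStrictOrderedRing K]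
    [Archimedean K] {ρ : K} (hρ : ρ < 1) (n : ℕ) : ∃ β : K, 0 < β ∧ β < 1 ∧ ρ ≤ β ^ n := by
  rcases eq_or_ne n 0 with rfl | hn
  · exact ⟨1 / 2, by norm_num, by norm_num, by simpa using hρ.le⟩
  · obtain ⟨β, β_pos, ρ_lt, pow_lt⟩ := exists_pow_btwn hn hρ one_pos
    exact ⟨β, β_pos, (pow_lt_one_iff_of_nonneg β_pos.le hn).1 pow_lt, ρ_lt.le⟩

lemma exists_compl_singleton_subset_range {ι α : Type*} [Finite α] {w : ι → α}
    (hw : Function.Injective w) (hcard : Nat.card α = Nat.card ι + 1) :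
    ∃ p, {p}ᶜ ⊆ Set.range w := by
  have ncard_compl : (Set.range w)ᶜ.ncard = 1 := by
    rw [Set.ncard_compl, Set.ncard_range_of_injective hw, hcard, Nat.add_sub_cancel_left]
  obtain ⟨p, hp⟩ := Set.ncard_eq_one.1 ncard_compl
  exact ⟨p, by rw [← hp, compl_compl]⟩

theorem exists_beta_block_energy_contraction_general (N m : ℕ) :
    ∃ β : ℝ, 0 < β ∧ β < 1 ∧
      ∀ (w : Fin m → Fin N) (p : Fin N), {p}ᶜ ⊆ Set.range w →
        ∀ v : Fin N → ℝ,
          energy N (wordProdInv N w *ᵥ v) (wordProdInv N w *ᵥ v) ≤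
            (((N : ℝ) + 2) * β) ^ (2 * m) * energy N v v := by
  have rate_lt_one : (2 ^ m * N ^ 3 / (2 ^ m * N ^ 3 + (N + 1)) : ℝ) < 1 := by
    rw [div_lt_one (by positivity)]
    exact lt_add_of_pos_right _ (by positivity)
  obtain ⟨β, β_pos, β_lt_one, rate_le⟩ := exists_lt_one_le_pow rate_lt_one (2 * m)
  refine ⟨β, β_pos, β_lt_one, fun w p hw v => ?_⟩
  have energy_nonneg := energy_self_nonneg v
  calc energy N (wordProdInv N w *ᵥ v) (wordProdInv N w *ᵥ v)
      ≤ 2 ^ m * N ^ 3 / (2 ^ m * N ^ 3 + (N + 1)) * ((N + 2) ^ (2 * m) * energy N v v) :=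
        energy_wordProdInv_mulVec_le hw v
    _ ≤ β ^ (2 * m) * ((N + 2) ^ (2 * m) * energy N v v) := by gcongr
    _ = ((N + 2) * β) ^ (2 * m) * energy N v v := by rw [mul_pow]; ring

theorem exists_beta_block_energy_contraction (N : ℕ) (hN : 3 ≤ N) :
    ∃ β : ℝ, 0 < β ∧ β < 1 ∧
      ∀ w : Fin (N - 1) → Fin N, Function.Injective w →
        ∀ v : Fin N → ℝ,
          energy N ((wordProdInv N w).mulVec v) ((wordProdInv N w).mulVec v) ≤
            (((N : ℝ) + 2) * β) ^ (2 * (N - 1)) * energy N v v := by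
  obtain ⟨β, β_pos, β_lt_one, contraction⟩ :=
    exists_beta_block_energy_contraction_general N (N - 1)
  refine ⟨β, β_pos, β_lt_one, fun w hw => ?_⟩
  obtain ⟨p, hp⟩ := exists_compl_singleton_subset_range hw (by simp only [Nat.card_fin]; omega)
  exact contraction w p hp
end

section
/- Let μ be the infinite product over ℕ of the uniform probability measure on {0,…,N−1}. Then for μ-almost every infinite word ω, liminf_{n→∞} C_N(ω,n)/n ≥ N!/((N−1)·N^{N−1}). -/
open Filter MeasureTheory
open scoped ENNReal

/-!
Windows of length `N - 1` in an i.i.d. word are identically distributed, and two of them are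
independent as soon as they do not overlap. Along each residue class modulo the window length they
are therefore pairwise independent, so Etemadi's strong law applies; averaging over the residue
classes gives the strong law for all windows. Applied to the indicator of injectivity, it shows that
`C_N(ω,n)/n` converges almost surely to `N!/N^{N-1}`, which exceeds the claimed bound.
-/

open ProbabilityTheory Topology Finset

section ResidueClasses

/- The inner range is `{k | K * k + r < n}`, since `⌈(n - r) / K⌉ = (n + (K - 1 - r)) / K`. -/
theorem sum_range_eq_sum_sum_residue {E : Type*} [AddCommMonoid E] {K : ℕ} (hK : 0 < K)
    (u : ℕ → E) (n : ℕ) :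
    ∑ i ∈ range n, u i =
      ∑ r ∈ range K, ∑ k ∈ range ((n + (K - 1 - r)) / K), u (K * k + r) := by
  rw [sum_sigma']
  refine sum_nbij' (fun i ↦ ⟨i % K, i / K⟩) (fun p ↦ K * p.2 + p.1) ?_ ?_ ?_ ?_ ?_
  · intro i hi
    have hr := Nat.mod_lt i hK
    have hdiv := Nat.div_add_mod' i K
    rw [mem_range] at hi
    simp only [mem_sigma, mem_range, hr, true_and]
    rw [← Nat.succ_le_iff, Nat.le_div_iff_mul_le hK, Nat.succ_mul]
    omega
  · rintro ⟨r, k⟩ hrk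
    simp only [mem_sigma, mem_range] at hrk ⊢
    obtain ⟨hr, hk⟩ := hrk
    rw [← Nat.succ_le_iff, Nat.le_div_iff_mul_le hK, Nat.succ_mul, mul_comm] at hk
    omega
  · exact fun i _ ↦ Nat.div_add_mod i K
  · rintro ⟨r, k⟩ hrk
    have hr : r < K := mem_range.1 (mem_sigma.1 hrk).1
    simp [Nat.mul_add_div hK, Nat.mod_eq_of_lt hr, Nat.div_eq_of_lt hr]
  · intro i _
    rw [Nat.div_add_mod]

theorem tendsto_add_div_div_atTop (c K : ℕ) :
    Tendsto (fun n : ℕ ↦ (((n + c) / K : ℕ) : ℝ) / n) atTop (𝓝 (K : ℝ)⁻¹) := by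
  have hfloor : Tendsto (fun n : ℕ ↦ ((n / K : ℕ) : ℝ) / n) atTop (𝓝 (K : ℝ)⁻¹) := by
    refine ((tendsto_nat_floor_mul_div_atTop (by positivity : (0 : ℝ) ≤ (K : ℝ)⁻¹)).comp
      tendsto_natCast_atTop_atTop).congr fun n ↦ ?_
    rw [Function.comp_apply, inv_mul_eq_div, Nat.floor_div_eq_div]
  have hshift : Tendsto (fun n : ℕ ↦ ((n + c : ℕ) : ℝ) / n) atTop (𝓝 1) := by
    simpa using (tendsto_natCast_div_add_atTop (c : ℝ)).inv₀ one_ne_zero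
  have hprod := ((tendsto_add_atTop_iff_nat c).2 hfloor).mul hshift
  rw [mul_one] at hprod
  refine hprod.congr' ?_
  filter_upwards [eventually_gt_atTop 0] with n hn
  exact div_mul_div_cancel₀ (by positivity)

theorem tendsto_average_of_tendsto_average_residue {E : Type*} [AddCommMonoid E] [Module ℝ E]
    [TopologicalSpace E] [ContinuousAdd E] [ContinuousSMul ℝ E] {K : ℕ} (hK : 0 < K)
    {u : ℕ → E} {a : ℕ → E}
    (h : ∀ r, Tendsto (fun n : ℕ ↦ (n : ℝ)⁻¹ • ∑ k ∈ range n, u (K * k + r)) atTop (𝓝 (a r))) :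
    Tendsto (fun n : ℕ ↦ (n : ℝ)⁻¹ • ∑ i ∈ range n, u i) atTop
      (𝓝 ((K : ℝ)⁻¹ • ∑ r ∈ range K, a r)) := by
  simp only [sum_range_eq_sum_sum_residue hK u, smul_sum (s := range K)]
  refine tendsto_finsetSum _ fun r _ ↦ ?_
  have hcount : Tendsto (fun n ↦ (n + (K - 1 - r)) / K) atTop atTop :=
    (Nat.tendsto_div_const_atTop hK.ne').comp (tendsto_add_atTop_nat _)
  refine ((tendsto_add_div_div_atTop (K - 1 - r) K).smul ((h r).comp hcount)).congr' ?_
  filter_upwards [hcount.eventually_gt_atTop 0] with n hn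
  have hn' : (((n + (K - 1 - r)) / K : ℕ) : ℝ) ≠ 0 := by positivity
  rw [Function.comp_apply, smul_smul, div_mul_eq_mul_div, mul_inv_cancel₀ hn', one_div]

end ResidueClasses

section StrongLaw

variable {Ω 𝓧 E : Type*} {mΩ : MeasurableSpace Ω} {P : Measure Ω} [MeasurableSpace 𝓧]
  [NormedAddCommGroup E] [NormedSpace ℝ E] [CompleteSpace E] [MeasurableSpace E] [BorelSpace E]

theorem pairwise_indepFun_residue {m : ℕ} {Y : ℕ → Ω → 𝓧}
    (hindep : ∀ i j, i + m < j → Y i ⟂ᵢ[P] Y j) (r : ℕ) :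
    Pairwise fun k l ↦ Y ((m + 1) * k + r) ⟂ᵢ[P] Y ((m + 1) * l + r) := by
  have : Std.Symm fun k l ↦ Y ((m + 1) * k + r) ⟂ᵢ[P] Y ((m + 1) * l + r) :=
    ⟨fun _ _ h ↦ h.symm⟩
  refine pairwise_iff_lt.2 fun k l hkl ↦ hindep _ _ ?_
  have hgap := Nat.mul_le_mul_left (m + 1) (Nat.succ_le_of_lt hkl)
  rw [Nat.mul_succ] at hgap
  omega

theorem strong_law_ae_residue {m : ℕ} {Y : ℕ → Ω → E} (hint : Integrable (Y 0) P)
    (hindep : ∀ i j, i + m < j → Y i ⟂ᵢ[P] Y j) (hident : ∀ i, IdentDistrib (Y i) (Y 0) P P)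
    (r : ℕ) :
    ∀ᵐ ω ∂P, Tendsto (fun n : ℕ ↦ (n : ℝ)⁻¹ • ∑ k ∈ range n, Y ((m + 1) * k + r) ω) atTop
      (𝓝 P[Y 0]) := by
  rw [← (hident ((m + 1) * 0 + r)).integral_eq]
  exact strong_law_ae (fun k ↦ Y ((m + 1) * k + r)) ((hident _).symm.integrable_snd hint)
    (pairwise_indepFun_residue hindep r) fun k ↦ (hident _).trans (hident _).symm

theorem strong_law_ae_of_mDependent (m : ℕ) {Y : ℕ → Ω → E} (hint : Integrable (Y 0) P)
    (hindep : ∀ i j, i + m < j → Y i ⟂ᵢ[P] Y j) (hident : ∀ i, IdentDistrib (Y i) (Y 0) P P) :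
    ∀ᵐ ω ∂P, Tendsto (fun n : ℕ ↦ (n : ℝ)⁻¹ • ∑ i ∈ range n, Y i ω) atTop (𝓝 P[Y 0]) := by
  filter_upwards [ae_all_iff.2 (strong_law_ae_residue hint hindep hident)] with ω hω
  have hcard : ((m + 1 : ℕ) : ℝ)⁻¹ • ∑ _r ∈ range (m + 1), P[Y 0] = P[Y 0] := by
    rw [sum_const, card_range, ← Nat.cast_smul_eq_nsmul ℝ, inv_smul_smul₀ (by positivity)]
  rw [← hcard]
  exact tendsto_average_of_tendsto_average_residue m.succ_pos hω

theorem indepFun_window {X : ℕ → Ω → 𝓧} (hX : ∀ i, Measurable (X i)) (hindep : iIndepFun X P)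
    {K i j : ℕ} (hij : i + K ≤ j) :
    (fun ω (l : Fin K) ↦ X (i + l) ω) ⟂ᵢ[P] (fun ω (l : Fin K) ↦ X (j + l) ω) := by
  have hdisj : Disjoint (Ico i (i + K)) (Ico j (j + K)) :=
    disjoint_left.2 fun l hl hl' ↦ by rw [mem_Ico] at hl hl'; omega
  have hmem (s : ℕ) (l : Fin K) : s + l ∈ Ico s (s + K) := by simp
  exact (hindep.indepFun_finset _ _ hdisj hX).comp
    (φ := fun x (l : Fin K) ↦ x ⟨i + l, hmem i l⟩) (ψ := fun x (l : Fin K) ↦ x ⟨j + l, hmem j l⟩)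
    (by fun_prop) (by fun_prop)

theorem identDistrib_window {X : ℕ → Ω → 𝓧} (hindep : iIndepFun X P)
    (hident : ∀ i, IdentDistrib (X i) (X 0) P P) (K i j : ℕ) :
    IdentDistrib (fun ω (l : Fin K) ↦ X (i + l) ω) (fun ω (l : Fin K) ↦ X (j + l) ω) P P := by
  have hinj (s : ℕ) : Function.Injective fun l : Fin K ↦ s + (l : ℕ) :=
    (add_right_injective s).comp Fin.val_injective
  exact IdentDistrib.pi (fun l ↦ (hident _).trans (hident _).symm)
    (hindep.precomp (hinj i)) (hindep.precomp (hinj j))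

theorem strong_law_ae_window {X : ℕ → Ω → 𝓧} (hX : ∀ i, Measurable (X i))
    (hindep : iIndepFun X P) (hident : ∀ i, IdentDistrib (X i) (X 0) P P) {K : ℕ}
    {f : (Fin K → 𝓧) → E} (hf : Measurable f) (hint : Integrable (fun ω ↦ f fun l ↦ X l ω) P) :
    ∀ᵐ ω ∂P, Tendsto (fun n : ℕ ↦ (n : ℝ)⁻¹ • ∑ i ∈ range n, f fun l ↦ X (i + l) ω) atTop
      (𝓝 (∫ ω, f (fun l ↦ X l ω) ∂P)) := by
  simpa only [zero_add] using strong_law_ae_of_mDependent (K - 1)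
    (Y := fun i ω ↦ f fun l ↦ X (i + l) ω) (by simpa only [zero_add] using hint)
    (fun i j hij ↦ (indepFun_window hX hindep (by omega)).comp hf hf)
    (fun i ↦ (identDistrib_window hindep hident K i 0).comp hf)

theorem measurePreserving_comp_infinitePi_pi {ι κ : Type*} [Fintype κ] (ν : Measure 𝓧)
    [IsProbabilityMeasure ν] {e : κ → ι} (he : Function.Injective e) :
    MeasurePreserving (fun (ω : ι → 𝓧) k ↦ ω (e k)) (Measure.infinitePi fun _ ↦ ν)
      (Measure.pi fun _ ↦ ν) where
  measurable := by fun_prop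
  map_eq := by rw [Measure.map_infinitePi_infinitePi_of_inj he, Measure.infinitePi_eq_pi]

theorem strong_law_ae_window_infinitePi (ν : Measure 𝓧) [IsProbabilityMeasure ν] {K : ℕ}
    {f : (Fin K → 𝓧) → E} (hf : Measurable f) (hint : Integrable f (Measure.pi fun _ ↦ ν)) :
    ∀ᵐ ω ∂Measure.infinitePi fun _ : ℕ ↦ ν,
      Tendsto (fun n : ℕ ↦ (n : ℝ)⁻¹ • ∑ i ∈ range n, f fun l ↦ ω (i + l)) atTop
        (𝓝 (∫ x, f x ∂Measure.pi fun _ ↦ ν)) := by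
  have hindep : iIndepFun (fun (i : ℕ) (ω : ℕ → 𝓧) ↦ ω i) (Measure.infinitePi fun _ ↦ ν) :=
    iIndepFun_infinitePi (X := fun _ ↦ id) fun _ ↦ measurable_id
  have hlaw (i : ℕ) : HasLaw (fun ω : ℕ → 𝓧 ↦ ω i) ν (Measure.infinitePi fun _ ↦ ν) :=
    (measurePreserving_eval_infinitePi (fun _ ↦ ν) i).hasLaw
  have hwindow := measurePreserving_comp_infinitePi_pi ν (Fin.val_injective (n := K))
  rw [← hwindow.hasLaw.integral_comp hint.aestronglyMeasurable]
  exact strong_law_ae_window (measurable_pi_apply ·) hindep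
    (fun i ↦ (hlaw i).identDistrib (hlaw 0)) hf (hwindow.integrable_comp_of_integrable hint)

end StrongLaw

section ProductMeasure

theorem eq_infinitePi_of_singleton {ι : Type*} {α : ι → Type*} [∀ i, MeasurableSpace (α i)]
    [∀ i, Countable (α i)] [∀ i, MeasurableSingletonClass (α i)] {ν : ∀ i, Measure (α i)}
    [∀ i, IsProbabilityMeasure (ν i)] {μ : Measure (∀ i, α i)}
    (h : ∀ (s : Finset ι) (g : ∀ i, α i), μ {ω | ∀ i ∈ s, ω i = g i} = ∏ i ∈ s, ν i {g i}) :
    μ = Measure.infinitePi ν := by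
  classical
  have (i : ι) : Nonempty (α i) := (ν i).nonempty_of_neZero
  refine IsProjectiveLimit.unique (fun s ↦ ?_) (Measure.isProjectiveLimit_infinitePi ν)
  refine Measure.ext_of_singleton fun a ↦ ?_
  let g : ∀ i, α i := fun i ↦ if hi : i ∈ s then a ⟨i, hi⟩ else Classical.arbitrary _
  have hg : s.restrict g = a := by ext i; simp [g]
  have hcyl : s.restrict ⁻¹' {s.restrict g} = {ω : ∀ i, α i | ∀ i ∈ s, ω i = g i} := by
    ext ω; simp [funext_iff]
  rw [← hg, Measure.map_apply (measurable_restrict s) (measurableSet_singleton _), hcyl, h,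
    Measure.pi_singleton, ← prod_coe_sort]
  rfl

theorem uniformOn_univ_singleton {α : Type*} [Fintype α] [MeasurableSpace α]
    [MeasurableSingletonClass α] (a : α) :
    uniformOn Set.univ {a} = (Fintype.card α : ℝ≥0∞)⁻¹ := by
  rw [uniformOn_univ, Measure.count_singleton, one_div]

theorem measureReal_pi_uniformOn_injective {ι α : Type*} [Fintype ι] [Fintype α]
    [MeasurableSpace α] [MeasurableSingletonClass α] :
    (Measure.pi fun _ : ι ↦ uniformOn (Set.univ : Set α)).real {x | Function.Injective x} =
      (Fintype.card α).descFactorial (Fintype.card ι) /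
        (Fintype.card α : ℝ) ^ Fintype.card ι := by
  classical
  have hcard : {x : ι → α | Function.Injective x}.ncard =
      (Fintype.card α).descFactorial (Fintype.card ι) := by
    rw [← Nat.card_coe_set_eq, ← Fintype.card_embedding_eq, ← Nat.card_eq_fintype_card]
    exact Nat.card_congr (Equiv.subtypeInjectiveEquivEmbedding ι α)
  have hmeas : MeasurableSet {x : ι → α | Function.Injective x} := (Set.toFinite _).measurableSet
  rw [← uniformOn_pi, Set.pi_univ, measureReal_def, uniformOn_univ, Measure.count_apply hmeas,
    ← (Set.toFinite _).cast_ncard_eq, hcard]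
  simp

end ProductMeasure

section BlockCount

/-- The `{0, 1}`-valued indicator, on tuples of letters, of having pairwise distinct entries. It is
real valued so that `blockCount` becomes a sum of it over windows, to which the strong law
applies. -/
noncomputable def injectiveIndicator {ι α : Type*} : (ι → α) → ℝ :=
  Set.indicator {x | Function.Injective x} 1

theorem integral_pi_uniformOn_injectiveIndicator {ι α : Type*} [Fintype ι] [Fintype α]
    [MeasurableSpace α] [MeasurableSingletonClass α] :
    ∫ x, injectiveIndicator x ∂(Measure.pi fun _ : ι ↦ uniformOn (Set.univ : Set α)) =
      (Fintype.card α).descFactorial (Fintype.card ι) /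
        (Fintype.card α : ℝ) ^ Fintype.card ι :=
  (integral_indicator_one (Set.toFinite _).measurableSet).trans measureReal_pi_uniformOn_injective

theorem blockCount_add (N : ℕ) (ω : ℕ → Fin N) (n : ℕ) :
    (blockCount N ω (n + (N - 2)) : ℝ) =
      ∑ i ∈ range n, injectiveIndicator fun j : Fin (N - 1) ↦ ω (i + j) := by
  classical
  simp only [injectiveIndicator, Set.indicator_apply, Set.mem_ofPred_eq, Pi.one_apply, sum_boole]
  norm_cast
  refine congrArg card (ext fun i ↦ ?_)
  simp only [mem_filter, mem_range, add_lt_add_iff_right, ← and_assoc, and_congr_left_iff]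
  omega

theorem tendsto_div_of_tendsto_add_div {u : ℕ → ℝ} {a : ℝ} (m : ℕ)
    (h : Tendsto (fun n : ℕ ↦ u (n + m) / n) atTop (𝓝 a)) :
    Tendsto (fun n : ℕ ↦ u n / n) atTop (𝓝 a) := by
  rw [← tendsto_add_atTop_iff_nat m, ← mul_one a]
  refine (h.mul (tendsto_natCast_div_add_atTop (m : ℝ))).congr' ?_
  filter_upwards [eventually_gt_atTop 0] with n hn
  rw [div_mul_div_cancel₀ (by positivity), Nat.cast_add]

theorem descFactorial_sub_one (n : ℕ) : n.descFactorial (n - 1) = n.factorial := by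
  rcases n with _ | n
  · rfl
  · simpa using Nat.factorial_mul_descFactorial (Nat.le_add_right n 1)

theorem blockCount_liminf_ae_general (N : ℕ) (μ : Measure (ℕ → Fin N)) [IsProbabilityMeasure μ]
    (hμ : ∀ (s : Finset ℕ) (g : ℕ → Fin N),
      μ {ω | ∀ i ∈ s, ω i = g i} = ((N : ℝ≥0∞))⁻¹ ^ s.card) :
    ∀ᵐ ω ∂μ, Tendsto (fun n : ℕ ↦ (blockCount N ω n : ℝ) / n) atTop
      (𝓝 ((N.factorial : ℝ) / (N : ℝ) ^ (N - 1))) := by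
  have : Nonempty (Fin N) := μ.nonempty_of_neZero.map (· 0)
  have : IsProbabilityMeasure (uniformOn (Set.univ : Set (Fin N))) :=
    isProbabilityMeasure_uniformOn Set.finite_univ Set.univ_nonempty
  obtain rfl : μ = Measure.infinitePi fun _ ↦ uniformOn Set.univ :=
    eq_infinitePi_of_singleton fun s g ↦ by simp [hμ, uniformOn_univ_singleton]
  filter_upwards [strong_law_ae_window_infinitePi (uniformOn Set.univ)
    (f := injectiveIndicator (ι := Fin (N - 1))) .of_discrete .of_finite] with ω hω
  refine tendsto_div_of_tendsto_add_div (N - 2) ?_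
  simpa only [← blockCount_add, integral_pi_uniformOn_injectiveIndicator, Fintype.card_fin,
    descFactorial_sub_one, smul_eq_mul, inv_mul_eq_div] using hω

end BlockCount

theorem blockCount_liminf_ae (N : ℕ) (hN : 3 ≤ N)
    (μ : Measure (ℕ → Fin N)) [IsProbabilityMeasure μ]
    (hμ : ∀ (s : Finset ℕ) (g : ℕ → Fin N),
      μ {ω | ∀ i ∈ s, ω i = g i} = ((N : ℝ≥0∞))⁻¹ ^ s.card) :
    ∀ᵐ ω ∂μ,
      (N.factorial : ℝ) / (((N : ℝ) - 1) * (N : ℝ) ^ (N - 1)) ≤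
        Filter.liminf (fun n : ℕ => (blockCount N ω n : ℝ) / n) Filter.atTop := by
  have hN' : (1 : ℝ) ≤ N - 1 := by
    have : (3 : ℝ) ≤ N := by exact_mod_cast hN
    linarith
  filter_upwards [blockCount_liminf_ae_general N μ hμ] with ω hω
  rw [hω.liminf_eq]
  gcongr
  exact le_mul_of_one_le_left (by positivity) hN'
end
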